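/- arXiv:2107.07910 — 2 statements merged into one kernel-verified Lean document; each statement's English description precedes it below -/
import Mathlib

section
/- Assume SSCP. Let t_l, t_r, x_r, x'_r ∈ T with t_l ≤ x_r < x'_r ≤ t_r. Then for every x_l ∈ φ^l_{t_l}(x_r) and every x'_l ∈ φ^l_{t_l}(x'_r), one has x'_l ≥ x_l; that is, every selection of candidate l's best-response correspondence is non-decreasing in the opponent's platform over [t_l, t_r]. -/
/-!
Write `t` for the ideal policy of candidate `l` and `y` for the opponent's platform. Since
`U t x y - u y t = P x y * (u x t - u y t)` (`U_sub`), best responses can be located by the sign of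
`u x t - u y t`, using that `u · t` is strictly decreasing to the right of its peak `t`.

* If `t < y`, every best response lies in `[t, y)` (`brL_mem_Ico`): the platform `t`
  itself yields a positive product, platforms at or beyond `y` yield a nonpositive one, and moving from `x < t` to `t` raises both the winning probability and the payoff from winning.
* If `t = y`, the only best response is `t` (`brL_self`), because winning with any other platform
  has positive probability and strictly hurts.

If `t = xr`, monotonicity therefore amounts to best responses to `xr'` being at least `t`. If
`t < xr`, a pair `xl' < xl` would satisfy `t ≤ xl' < xl < xr < xr'`, and the first half of SSCP
would make `xl` strictly better than `xl'` against `xr'`.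
-/

open Set

/-- The policy space `T = [0,1] ⊆ ℝ`. -/
def T : Set ℝ := Set.Icc 0 1

/-- Hypotheses on the beliefs `F` about the median voter's ideal policy:
continuous, strictly increasing on `T`, with values in `[0,1]` (full support). -/
def Fhyp (F : ℝ → ℝ) : Prop :=
  ContinuousOn F T ∧ StrictMonoOn F T ∧ ∀ x ∈ T, 0 ≤ F x ∧ F x ≤ 1

/-- The probability that candidate `l` wins given platforms `xl, xr`. -/
noncomputable def P (F : ℝ → ℝ) (xl xr : ℝ) : ℝ :=
  if xl < xr then F ((xl + xr) / 2)
  else if xl = xr then 1 / 2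
  else 1 - F ((xl + xr) / 2)

/-- Hypotheses on the payoff `u x t`: jointly continuous on `T × T`, strictly
concave in the platform, and uniquely maximized at the ideal policy. -/
def uhyp (u : ℝ → ℝ → ℝ) : Prop :=
  ContinuousOn (fun p : ℝ × ℝ => u p.1 p.2) (T ×ˢ T) ∧
  (∀ t ∈ T, StrictConcaveOn ℝ T (fun x => u x t)) ∧
  (∀ t ∈ T, ∀ x ∈ T, x ≠ t → u x t < u t t)

/-- Expected payoff of a candidate with ideal policy `t` given platforms `xl, xr`. -/
noncomputable def U (F : ℝ → ℝ) (u : ℝ → ℝ → ℝ) (t xl xr : ℝ) : ℝ :=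
  P F xl xr * u xl t + (1 - P F xl xr) * u xr t

/-- Best-response set of candidate `l` with ideal policy `t` to opponent platform `x`. -/
def brL (F : ℝ → ℝ) (u : ℝ → ℝ → ℝ) (t x : ℝ) : Set ℝ :=
  {y ∈ T | ∀ z ∈ T, U F u t z x ≤ U F u t y x}

/-- Best-response set of candidate `r` with ideal policy `t` to opponent platform `x`. -/
def brR (F : ℝ → ℝ) (u : ℝ → ℝ → ℝ) (t x : ℝ) : Set ℝ :=
  {y ∈ T | ∀ z ∈ T, U F u t x z ≤ U F u t x y}

/-- The set of Nash equilibria given ideal policies `tl, tr`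
(ordered coordinatewise via the product order on `ℝ × ℝ`). -/
def E (F : ℝ → ℝ) (u : ℝ → ℝ → ℝ) (tl tr : ℝ) : Set (ℝ × ℝ) :=
  {p | p.1 ∈ brL F u tl p.2 ∧ p.2 ∈ brR F u tr p.1}

/-- Strict single crossing property (SSCP). -/
def SSCP (F : ℝ → ℝ) (u : ℝ → ℝ → ℝ) : Prop :=
  ∀ t x x' y y' t' : ℝ, t ∈ T → x ∈ T → x' ∈ T → y ∈ T → y' ∈ T → t' ∈ T →
    t ≤ x → x < x' → x' < y → y < y' → y' ≤ t' →
    (U F u t x' y ≥ U F u t x y → U F u t x' y' > U F u t x y') ∧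
    (U F u t' x' y ≥ U F u t' x' y' → U F u t' x y > U F u t' x y')

/-- Strict log supermodularity (SLS). -/
def SLS (u : ℝ → ℝ → ℝ) : Prop :=
  ∀ t t' x x' y : ℝ, t ∈ T → t' ∈ T → x ∈ T → x' ∈ T → y ∈ T →
    ((t < t' ∧ t' ≤ x ∧ x < x' ∧ x' < y) ∨ (y < x ∧ x < x' ∧ x' ≤ t ∧ t < t')) →
    (u x' t' - u y t') / (u x t' - u y t') > (u x' t - u y t) / (u x t - u y t)

/-- The expected policy function. -/
noncomputable def pol (F : ℝ → ℝ) (xl xr : ℝ) : ℝ :=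
  P F xl xr * xl + (1 - P F xl xr) * xr

lemma U_sub (F : ℝ → ℝ) (u : ℝ → ℝ → ℝ) (t x y : ℝ) :
    U F u t x y - u y t = P F x y * (u x t - u y t) := by
  unfold U; ring

/-- Strict concavity makes the payoff strictly decreasing to the right of the ideal policy. -/
lemma u_lt_of_lt {u : ℝ → ℝ → ℝ} (hu : uhyp u) {t a b : ℝ} (ht : t ∈ T) (ha : a ∈ T)
    (hb : b ∈ T) (hta : t ≤ a) (hab : a < b) : u b t < u a t := by
  rcases hta.eq_or_lt with rfl | hta
  · exact hu.2.2 t ht b hb hab.ne'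
  · have hbt : u b t < u t t := hu.2.2 t ht b hb (hta.trans hab).ne'
    have hz : a ∈ openSegment ℝ t b := by
      rw [openSegment_eq_Ioo (hta.trans hab)]; exact ⟨hta, hab⟩
    have := (hu.2.1 t ht).lt_on_openSegment ht hb (hta.trans hab).ne hz
    simpa [min_eq_right hbt.le] using this

/-- A full-support belief gives every platform a positive probability of winning. -/
lemma P_pos {F : ℝ → ℝ} (hF : Fhyp F) {x y : ℝ} (hx : x ∈ T) (hy : y ∈ T) : 0 < P F x y := by
  obtain ⟨-, hmono, hbd⟩ := hF
  have h0 : (0 : ℝ) ∈ T := ⟨le_rfl, zero_le_one⟩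
  have h1 : (1 : ℝ) ∈ T := ⟨zero_le_one, le_rfl⟩
  obtain ⟨hx0, hx1⟩ := hx
  obtain ⟨hy0, hy1⟩ := hy
  have hm : (x + y) / 2 ∈ T := ⟨by linarith, by linarith⟩
  unfold P
  split_ifs with hlt heq
  · have := hmono h0 hm (by linarith)
    linarith [(hbd 0 h0).1]
  · norm_num
  · have hgt : y < x := lt_of_le_of_ne (not_lt.mp hlt) (Ne.symm heq)
    have := hmono hm h1 (by linarith)
    linarith [(hbd 1 h1).2]

lemma brL_mem_Ico {F : ℝ → ℝ} {u : ℝ → ℝ → ℝ} (hF : Fhyp F) (hu : uhyp u) {t x y : ℝ}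
    (ht : t ∈ T) (hy : y ∈ T) (hty : t < y) (hx : x ∈ brL F u t y) : t ≤ x ∧ x < y := by
  obtain ⟨hxT, hbest⟩ := hx
  have hut : u y t < u t t := u_lt_of_lt hu ht ht hy le_rfl hty
  have hval : P F t y * (u t t - u y t) ≤ P F x y * (u x t - u y t) := by
    rw [← U_sub, ← U_sub]; linarith [hbest t ht]
  constructor
  · by_contra! hxt
    have hux : u x t < u t t := hu.2.2 t ht x hxT hxt.ne
    have hP : P F x y < P F t y := by
      unfold P
      rw [if_pos (hxt.trans hty), if_pos hty]
      obtain ⟨hx0, hx1⟩ := hxT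
      obtain ⟨ht0, ht1⟩ := ht
      obtain ⟨hy0, hy1⟩ := hy
      exact hF.2.1 ⟨by linarith, by linarith⟩ ⟨by linarith, by linarith⟩ (by linarith)
    nlinarith [mul_pos (P_pos hF hxT hy) (sub_pos.mpr hux),
      mul_pos (sub_pos.mpr hP) (sub_pos.mpr hut)]
  · by_contra! hyx
    have hux : u x t ≤ u y t := by
      rcases hyx.eq_or_lt with rfl | hyx
      · exact le_rfl
      · exact (u_lt_of_lt hu ht hy hxT hty.le hyx).le
    have hpos := mul_pos (P_pos hF ht hy) (sub_pos.mpr hut)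
    have hnonpos := mul_nonpos_of_nonneg_of_nonpos (P_pos hF hxT hy).le (sub_nonpos.mpr hux)
    linarith

lemma brL_self {F : ℝ → ℝ} {u : ℝ → ℝ → ℝ} (hF : Fhyp F) (hu : uhyp u) {t x : ℝ}
    (ht : t ∈ T) (hx : x ∈ brL F u t t) : x = t := by
  obtain ⟨hxT, hbest⟩ := hx
  by_contra hne
  have hux : u x t < u t t := hu.2.2 t ht x hxT hne
  have hlt := mul_pos (P_pos hF hxT ht) (sub_pos.mpr hux)
  have h1 := U_sub F u t x t
  have h2 := U_sub F u t t t
  have h3 := hbest t ht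
  nlinarith

/-- Under SSCP, every selection of candidate `l`'s best-response correspondence
is non-decreasing in the opponent's platform over `[t_l, t_r]`. -/
theorem brL_monotone_in_opponent (F : ℝ → ℝ) (u : ℝ → ℝ → ℝ)
    (hF : Fhyp F) (hu : uhyp u) (hSSCP : SSCP F u)
    (tl tr xr xr' : ℝ) (htl : tl ∈ T) (htr : tr ∈ T) (hxr : xr ∈ T) (hxr' : xr' ∈ T)
    (h1 : tl ≤ xr) (h2 : xr < xr') (h3 : xr' ≤ tr) :
    ∀ xl ∈ brL F u tl xr, ∀ xl' ∈ brL F u tl xr', xl ≤ xl' := by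
  intro xl hxl xl' hxl'
  have hI' := brL_mem_Ico hF hu htl hxr' (h1.trans_lt h2) hxl'
  rcases h1.eq_or_lt with rfl | hlt
  · rw [brL_self hF hu htl hxl]; exact hI'.1
  · have hI := brL_mem_Ico hF hu htl hxr hlt hxl
    by_contra! hcon
    have := (hSSCP tl xl' xl xr xr' tr htl hxl'.1 hxl.1 hxr hxr' htr hI'.1 hcon hI.2 h2 h3).1
      (hxl.2 xl' hxl'.1)
    exact absurd (hxl'.2 xl hxl.1) (not_le.mpr this)
end

section
/- Assume SLS. Let t_r < t'_r in T and fix x_l ∈ T with x_l < t'_r. Then for every x_r ∈ φ^r_{t_r}(x_l) and every x'_r ∈ φ^r_{t'_r}(x_l), one has x'_r ≥ x_r; that is, candidate r's best responses are increasing in candidate r's ideal policy. -/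
open Set

/-!
Fix the opponent's platform `y`. For `z > y`, candidate `r` with ideal policy `t` gains
`(1 - F ((y + z) / 2)) * (u z t - u y t)` over the payoff `u y t` obtained by copying `y`
(`U_of_lt`). If `y < t`, some platform gives a positive gain, so every best response lies in
`(y, t]` (`brR_mem_Ioc`). If `t ≤ y`, platforms `z > y` give a negative gain, so no best response
exceeds `y` (`brR_le_of_le`).

Let `x` and `x'` be best responses for `t < t'` with `y < t'`, and suppose `x' < x`. Then
`y < x' < x`, so `y < t` and `x ≤ t`. With `p`, `p'` the winning probabilities at `x`, `x'`,
optimality for `t` bounds `(u x t - u y t) / (u x' t - u y t)` below by `p' / p`, and optimality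
for `t'` bounds the same ratio at `t'` above by `p' / p`, contradicting strict log supermodularity.
-/

lemma u_lt_of_le_ideal {u : ℝ → ℝ → ℝ} (hu : uhyp u) {t a b : ℝ} (ht : t ∈ T) (ha : a ∈ T)
    (hab : a < b) (hbt : b ≤ t) : u a t < u b t := by
  obtain ⟨-, hc, hm⟩ := hu
  have hat : a < t := hab.trans_le hbt
  have hmax := hm t ht a ha hat.ne
  rcases hbt.eq_or_lt with rfl | hbt
  · exact hmax
  · have hb : b ∈ openSegment ℝ a t := by
      rw [openSegment_eq_Ioo hat]; exact ⟨hab, hbt⟩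
    have h := (hc t ht).lt_on_openSegment ha ht hat.ne hb
    rwa [min_eq_left hmax.le] at h

lemma u_lt_of_ideal_le {u : ℝ → ℝ → ℝ} (hu : uhyp u) {t a b : ℝ} (ht : t ∈ T) (hb : b ∈ T)
    (hta : t ≤ a) (hab : a < b) : u b t < u a t := by
  obtain ⟨-, hc, hm⟩ := hu
  have htb : t < b := hta.trans_lt hab
  have hmax := hm t ht b hb htb.ne'
  rcases hta.eq_or_lt with rfl | hta
  · exact hmax
  · have ha : a ∈ openSegment ℝ t b := by
      rw [openSegment_eq_Ioo htb]; exact ⟨hta, hab⟩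
    have h := (hc t ht).lt_on_openSegment ht hb htb.ne ha
    rwa [min_eq_right hmax.le] at h

lemma U_of_lt (F : ℝ → ℝ) (u : ℝ → ℝ → ℝ) (t : ℝ) {y z : ℝ} (h : y < z) :
    U F u t y z = u y t + (1 - F ((y + z) / 2)) * (u z t - u y t) := by
  simp only [U, P, if_pos h]; ring

lemma U_self (F : ℝ → ℝ) (u : ℝ → ℝ → ℝ) (t y : ℝ) : U F u t y y = u y t := by
  simp only [U]; ring

lemma U_of_gt (F : ℝ → ℝ) (u : ℝ → ℝ → ℝ) (t : ℝ) {y z : ℝ} (h : z < y) :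
    U F u t y z = u y t + F ((y + z) / 2) * (u z t - u y t) := by
  simp only [U, P, if_neg h.not_gt, if_neg h.ne']; ring

lemma midpoint_mem_T {y z : ℝ} (hy : y ∈ T) (hz : z ∈ T) : (y + z) / 2 ∈ T := by
  obtain ⟨hy0, hy1⟩ := hy
  obtain ⟨hz0, hz1⟩ := hz
  constructor <;> linarith

/-- The right-hand candidate wins with positive probability: distinct platforms have a midpoint
below `1`, where `F` is strictly smaller than `F 1 ≤ 1`. -/
lemma one_sub_F_midpoint_pos {F : ℝ → ℝ} (hF : Fhyp F) {y z : ℝ} (hy : y ∈ T) (hz : z ∈ T)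
    (h : y < z) : 0 < 1 - F ((y + z) / 2) := by
  have h1 : (1 : ℝ) ∈ T := ⟨zero_le_one, le_rfl⟩
  have hlt : (y + z) / 2 < 1 := by linarith [hz.2]
  have := hF.2.1 (midpoint_mem_T hy hz) h1 hlt
  linarith [(hF.2.2 1 h1).2]

/-- Best responses to `y < t` lie strictly right of `y` and do not overshoot the ideal policy. -/
lemma brR_mem_Ioc {F : ℝ → ℝ} {u : ℝ → ℝ → ℝ} (hF : Fhyp F) (hu : uhyp u) {t y x : ℝ}
    (ht : t ∈ T) (hy : y ∈ T) (hyt : y < t) (hx : x ∈ brR F u t y) : x ∈ Set.Ioc y t := by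
  obtain ⟨hxT, hbest⟩ := hx
  have hdev := hbest t ht
  rw [U_of_lt F u t hyt] at hdev
  have hp := one_sub_F_midpoint_pos hF hy ht hyt
  have hgain := sub_pos.2 (u_lt_of_le_ideal hu ht hy hyt le_rfl)
  have hpos := mul_pos hp hgain
  have hyx : y < x := by
    by_contra! hxy
    rcases hxy.eq_or_lt with rfl | hxy
    · rw [U_self] at hdev
      linarith
    · rw [U_of_gt F u t hxy] at hdev
      have hloss := sub_neg.2 (u_lt_of_le_ideal hu ht hxT hxy hyt.le)
      have := mul_nonpos_of_nonneg_of_nonpos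
        (hF.2.2 _ (midpoint_mem_T hy hxT)).1 hloss.le
      linarith
  refine ⟨hyx, ?_⟩
  -- Beyond `t`, moving back to `t` raises both the winning probability and the policy payoff.
  by_contra! htx
  rw [U_of_lt F u t hyx] at hdev
  have hpx := one_sub_F_midpoint_pos hF hy hxT hyx
  have hF' := hF.2.1 (midpoint_mem_T hy ht) (midpoint_mem_T hy hxT)
    (show (y + t) / 2 < (y + x) / 2 by linarith)
  have hux := u_lt_of_ideal_le hu ht hxT le_rfl htx
  have h1 := mul_lt_mul_of_pos_left (sub_lt_sub_right hux (u y t)) hpx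
  have h2 := mul_lt_mul_of_pos_right (sub_lt_sub_left hF' 1) hgain
  linarith

lemma brR_le_of_le {F : ℝ → ℝ} {u : ℝ → ℝ → ℝ} (hF : Fhyp F) (hu : uhyp u) {t y x : ℝ}
    (ht : t ∈ T) (hy : y ∈ T) (hty : t ≤ y) (hx : x ∈ brR F u t y) : x ≤ y := by
  obtain ⟨hxT, hbest⟩ := hx
  by_contra! hyx
  have hdev := hbest y hy
  rw [U_self, U_of_lt F u t hyx] at hdev
  have := mul_neg_of_pos_of_neg (one_sub_F_midpoint_pos hF hy hxT hyx)
    (sub_neg.2 (u_lt_of_ideal_le hu ht hxT hty hyx))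
  linarith

/-- Under SLS, candidate `r`'s best responses are increasing in candidate `r`'s
ideal policy. -/
theorem brR_monotone_in_ideal (F : ℝ → ℝ) (u : ℝ → ℝ → ℝ)
    (hF : Fhyp F) (hu : uhyp u) (hSLS : SLS u)
    (tr tr' xl : ℝ) (htr : tr ∈ T) (htr' : tr' ∈ T) (hxl : xl ∈ T)
    (hlt : tr < tr') (hx : xl < tr') :
    ∀ xr ∈ brR F u tr xl, ∀ xr' ∈ brR F u tr' xl, xr ≤ xr' := by
  intro x hx1 x' hx2
  by_contra! hlt'
  obtain ⟨hyx', -⟩ := brR_mem_Ioc hF hu htr' hxl hx hx2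
  have hyx : xl < x := hyx'.trans hlt'
  have hyt : xl < tr := by
    by_contra! h
    exact (brR_le_of_le hF hu htr hxl h hx1).not_gt hyx
  obtain ⟨-, hxt⟩ := brR_mem_Ioc hF hu htr hxl hyt hx1
  have hS := hSLS tr tr' x' x xl htr htr' hx2.1 hx1.1 hxl (Or.inr ⟨hyx', hlt', hxt, hlt⟩)
  have hp := one_sub_F_midpoint_pos hF hxl hx1.1 hyx
  have h1 := hx1.2 x' hx2.1
  have h2 := hx2.2 x hx1.1
  rw [U_of_lt F u _ hyx, U_of_lt F u _ hyx'] at h1 h2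
  have hB := sub_pos.2 (u_lt_of_le_ideal hu htr hxl hyx' (hlt'.le.trans hxt))
  have hA := sub_pos.2 (u_lt_of_le_ideal hu htr' hxl hyx' (hlt'.le.trans (hxt.trans hlt.le)))
  have hlow : (1 - F ((xl + x') / 2)) / (1 - F ((xl + x) / 2))
      ≤ (u x tr - u xl tr) / (u x' tr - u xl tr) := by
    rw [div_le_div_iff₀ hp hB]; linarith
  have hupp : (u x tr' - u xl tr') / (u x' tr' - u xl tr')
      ≤ (1 - F ((xl + x') / 2)) / (1 - F ((xl + x) / 2)) := by
    rw [div_le_div_iff₀ hA hp]; linarith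
  exact (hupp.trans hlow).not_gt hS
end
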